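/- arXiv:1706.06911 — 12 statements merged into one kernel-verified Lean document; each statement's English description precedes it below -/
import Mathlib

section
/- Let T ⊆ {1,…,r}. The reduction digraph G(T) satisfies condition (a) — i.e., every state vertex x_j (1 ≤ j ≤ N+1) lies in the same strongly connected component of G(T) as both vertices y_i and u_1 for some i ∈ T — if and only if ⋃_{i∈T} S_i = {1,…,N}. -/
/-- Vertices of the reduction digraph: states `x_1,…,x_{N+1}`, the single input `u_1`,
and outputs `y_1,…,y_r`. -/
abbrev RVert (N r : ℕ) : Type := Fin (N + 1) ⊕ Unit ⊕ Fin r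

/-- State vertex. -/
def rX {N r : ℕ} (j : Fin (N + 1)) : RVert N r := Sum.inl j

/-- The input vertex `u_1`. -/
def rU {N r : ℕ} : RVert N r := Sum.inr (Sum.inl ())

/-- Output vertex `y_i`. -/
def rY {N r : ℕ} (i : Fin r) : RVert N r := Sum.inr (Sum.inr i)

/-- Edge relation of the reduction digraph `G(T)`: self-loops on every state,
`x_{N+1} → x_j` for `j ≤ N`, `u_1 → x_{N+1}`, `x_j → y_i` whenever `j ∈ S i`,
and `y_i → u_1` whenever `i ∈ T`. -/
def redEdge {N r : ℕ} (S : Fin r → Finset (Fin N)) (T : Finset (Fin r)) :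
    RVert N r → RVert N r → Prop
  | Sum.inl a, Sum.inl c => a = c ∨ (a = Fin.last N ∧ c ≠ Fin.last N)
  | Sum.inr (Sum.inl _), Sum.inl c => c = Fin.last N
  | Sum.inl a, Sum.inr (Sum.inr i) => ∃ j : Fin N, Fin.castSucc j = a ∧ j ∈ S i
  | Sum.inr (Sum.inr i), Sum.inr (Sum.inl _) => i ∈ T
  | _, _ => False

/-- Two vertices lie in the same strongly connected component: each is reachable
from the other (reachability is the reflexive–transitive closure of the edges). -/
def sameSCC {α : Type*} (E : α → α → Prop) (a b : α) : Prop :=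
  Relation.ReflTransGen E a b ∧ Relation.ReflTransGen E b a

/-- `T` satisfies condition (a): every state vertex `x_j` lies in the same SCC of
`G(T)` as both `y_i` and `u_1` for some `i ∈ T`. -/
def redCondA {N r : ℕ} (S : Fin r → Finset (Fin N)) (T : Finset (Fin r)) : Prop :=
  ∀ a : Fin (N + 1), ∃ i ∈ T,
    sameSCC (redEdge S T) (rX a) (rY i) ∧ sameSCC (redEdge S T) (rX a) rU

/-- `T` satisfies condition (a) in the reduction digraph `G(T)` if
and only if the sets `S_i`, `i ∈ T`, cover the universe `{1,…,N}`. -/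
theorem reduction_condA_iff_cover {N r : ℕ} (hN : 1 ≤ N) (hr : 1 ≤ r)
    (S : Fin r → Finset (Fin N)) (hcover : ∀ x : Fin N, ∃ i : Fin r, x ∈ S i)
    (w : Fin r → NNReal) (T : Finset (Fin r)) :
    redCondA S T ↔ ∀ x : Fin N, ∃ i ∈ T, x ∈ S i := by
  constructor
  · intro h x
    by_contra hx
    push Not at hx
    obtain ⟨i, hi, -, hu, -⟩ := h x.castSucc
    -- the set `{x_j} ∪ {y_k : k ∉ T}` is closed under edges
    have key : ∀ v, Relation.ReflTransGen (redEdge S T) (rX x.castSucc) v →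
        (v = rX x.castSucc ∨ ∃ k, k ∉ T ∧ v = rY k) := by
      intro v hv
      induction hv with
      | refl => exact Or.inl rfl
      | @tail b c _ hbc ih =>
        rcases ih with rfl | ⟨k, hk, rfl⟩
        · rcases c with c | c | k
          · rcases hbc with h1 | ⟨h1, -⟩
            · exact Or.inl (by rw [h1]; rfl)
            · exact absurd h1 (Fin.castSucc_lt_last x).ne
          · exact hbc.elim
          · obtain ⟨j, hj, hjk⟩ := hbc
            have hjx : j = x := Fin.castSucc_injective N hj
            subst hjx
            exact Or.inr ⟨k, fun hkT => hx k hkT hjk, rfl⟩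
        · rcases c with c | c | k'
          · exact hbc.elim
          · exact absurd hbc hk
          · exact hbc.elim
    rcases key _ hu with h1 | ⟨k, -, h1⟩
    · simp [rU, rX] at h1
    · simp [rU, rY] at h1
  · intro h a
    have hUL : Relation.ReflTransGen (redEdge S T) rU (rX (Fin.last N)) :=
      Relation.ReflTransGen.single (show Fin.last N = Fin.last N from rfl)
    have hLX : ∀ x : Fin N, Relation.ReflTransGen (redEdge S T)
        (rX (Fin.last N)) (rX x.castSucc) := fun x =>
      Relation.ReflTransGen.single (Or.inr ⟨rfl, (Fin.castSucc_lt_last x).ne⟩)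
    have hXY : ∀ (x : Fin N) (i : Fin r), x ∈ S i → Relation.ReflTransGen (redEdge S T)
        (rX x.castSucc) (rY i) := fun x i hi =>
      Relation.ReflTransGen.single (show ∃ j : Fin N, _ from ⟨x, rfl, hi⟩)
    have hYU : ∀ i ∈ T, Relation.ReflTransGen (redEdge S T) (rY i) rU := fun i hi =>
      Relation.ReflTransGen.single (show i ∈ T from hi)
    induction a using Fin.lastCases with
    | last =>
      obtain ⟨i, hi, hx⟩ := h ⟨0, hN⟩
      have hLY := (hLX _).trans (hXY _ i hx)
      exact ⟨i, hi, ⟨hLY, (hYU i hi).trans hUL⟩, hLY.trans (hYU i hi), hUL⟩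
    | cast x =>
      obtain ⟨i, hi, hx⟩ := h x
      have hUX := hUL.trans (hLX x)
      exact ⟨i, hi, ⟨hXY x i hx, (hYU i hi).trans hUX⟩, (hXY x i hx).trans (hYU i hi), hUX⟩
end

section
/- The minimum of Σ_{i∈T} w(i) over all T ⊆ {1,…,r} satisfying condition (a) equals the minimum of Σ_{i∈S'} w(i) over all S' ⊆ {1,…,r} with ⋃_{i∈S'} S_i = {1,…,N}. Moreover, if T* satisfies condition (a) and minimizes Σ_{i∈T} w(i) among all T satisfying condition (a), then ⋃_{i∈T*} S_i = {1,…,N} and Σ_{i∈T*} w(i) ≤ Σ_{i∈S'} w(i) for every S' ⊆ {1,…,r} with ⋃_{i∈S'} S_i = {1,…,N}; that is, T* yields a minimum-weight set cover. -/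
theorem redCondA_iff_cover {N r : ℕ} (hN : 1 ≤ N)
    (S : Fin r → Finset (Fin N)) (T : Finset (Fin r)) :
    redCondA S T ↔ ∀ x : Fin N, ∃ i ∈ T, x ∈ S i := by
  constructor
  · intro h x
    by_contra hx
    obtain ⟨i, hi, -, hu, -⟩ := h (Fin.castSucc x)
    have inv : ∀ v : RVert N r,
        Relation.ReflTransGen (redEdge S T) (rX (Fin.castSucc x)) v →
        v = rX (Fin.castSucc x) ∨ ∃ i, x ∈ S i ∧ v = rY i := by
      intro v hv
      induction hv with
      | refl => exact Or.inl rfl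
      | @tail b c _ hbc ih =>
        rcases ih with rfl | ⟨i, hxi, rfl⟩
        · rcases c with c | c | c
          · rcases hbc with h | ⟨h, -⟩
            · left; rw [h]; rfl
            · exact absurd h (Fin.castSucc_lt_last x).ne
          · exact hbc.elim
          · obtain ⟨j, hj, hjS⟩ := hbc
            have hjx : j = x := Fin.castSucc_injective N hj
            subst hjx
            exact Or.inr ⟨c, hjS, rfl⟩
        · rcases c with c | c | c
          · exact hbc.elim
          · exact absurd ⟨i, hbc, hxi⟩ hx
          · exact hbc.elim
    rcases inv _ hu with h | ⟨_, _, h⟩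
    · simp [rU, rX] at h
    · simp [rU, rY] at h
  · intro h
    have key : ∀ x : Fin N, ∃ i ∈ T,
        Relation.ReflTransGen (redEdge S T) (rX (Fin.castSucc x)) (rY i) ∧
        Relation.ReflTransGen (redEdge S T) (rY i) rU := by
      intro x
      obtain ⟨i, hi, hxi⟩ := h x
      exact ⟨i, hi, .single ⟨x, rfl, hxi⟩, .single hi⟩
    have ul : Relation.ReflTransGen (redEdge S T) rU (rX (Fin.last N)) :=
      .single (show Fin.last N = Fin.last N from rfl)
    have lx : ∀ x : Fin N, Relation.ReflTransGen (redEdge S T)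
        (rX (Fin.last N)) (rX (Fin.castSucc x)) := fun x =>
      .single (Or.inr ⟨rfl, (Fin.castSucc_lt_last x).ne⟩)
    intro a
    induction a using Fin.lastCases with
    | last =>
      obtain ⟨i, hi, h1, h2⟩ := key ⟨0, hN⟩
      have h3 := (lx ⟨0, hN⟩).trans h1
      exact ⟨i, hi, ⟨h3, h2.trans ul⟩, h3.trans h2, ul⟩
    | cast x =>
      obtain ⟨i, hi, h1, h2⟩ := key x
      have h3 := ul.trans (lx x)
      exact ⟨i, hi, ⟨h1, h2.trans h3⟩, h1.trans h2, h3⟩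

/-- the minimum weight of a `T` satisfying condition (a) equals the
minimum weight of a set cover; moreover any minimum-weight `T*` satisfying
condition (a) is a minimum-weight set cover. -/
theorem reduction_opt_eq_setCover_opt {N r : ℕ} (hN : 1 ≤ N) (hr : 1 ≤ r)
    (S : Fin r → Finset (Fin N)) (hcover : ∀ x : Fin N, ∃ i : Fin r, x ∈ S i)
    (w : Fin r → NNReal) :
    (sInf {c : NNReal | ∃ T : Finset (Fin r), redCondA S T ∧ c = ∑ i ∈ T, w i}
        = sInf {c : NNReal | ∃ T : Finset (Fin r),
            (∀ x : Fin N, ∃ i ∈ T, x ∈ S i) ∧ c = ∑ i ∈ T, w i}) ∧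
    ∀ Tstar : Finset (Fin r), redCondA S Tstar →
      (∀ T : Finset (Fin r), redCondA S T → ∑ i ∈ Tstar, w i ≤ ∑ i ∈ T, w i) →
      ((∀ x : Fin N, ∃ i ∈ Tstar, x ∈ S i) ∧
        ∀ T' : Finset (Fin r), (∀ x : Fin N, ∃ i ∈ T', x ∈ S i) →
          ∑ i ∈ Tstar, w i ≤ ∑ i ∈ T', w i) := by
  simp only [redCondA_iff_cover hN]
  exact ⟨trivial, fun Tstar h1 h2 => ⟨h1, h2⟩⟩
end

section
/- Let ε ≥ 1. If T ⊆ {1,…,r} satisfies condition (a) and Σ_{i∈T} w(i) ≤ ε · min{ Σ_{i∈T'} w(i) : T' ⊆ {1,…,r} satisfies condition (a) }, then Σ_{i∈T} w(i) ≤ ε · min{ Σ_{i∈S'} w(i) : S' ⊆ {1,…,r}, ⋃_{i∈S'} S_i = {1,…,N} }; that is, an ε-optimal feedback selection yields an ε-optimal weighted set cover. -/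
/-- Every set cover satisfies condition (a). -/
lemma redCondA_of_cover {N r : ℕ} (hN : 1 ≤ N) (S : Fin r → Finset (Fin N))
    (T : Finset (Fin r)) (h : ∀ x : Fin N, ∃ i ∈ T, x ∈ S i) : redCondA S T := by
  have hlast : ∀ j : Fin N,
      Relation.ReflTransGen (redEdge S T) (rX (Fin.last N)) (rX (Fin.castSucc j)) :=
    fun j => Relation.ReflTransGen.single (Or.inr ⟨rfl, (Fin.castSucc_lt_last j).ne⟩)
  have hul : Relation.ReflTransGen (redEdge S T) rU (rX (Fin.last N)) :=
    Relation.ReflTransGen.single (show Fin.last N = Fin.last N from rfl)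
  have hxy : ∀ (j : Fin N) (i : Fin r), j ∈ S i →
      Relation.ReflTransGen (redEdge S T) (rX (Fin.castSucc j)) (rY i) :=
    fun j i hj => Relation.ReflTransGen.single
      (show ∃ k : Fin N, Fin.castSucc k = Fin.castSucc j ∧ k ∈ S i from ⟨j, rfl, hj⟩)
  have hyu : ∀ i ∈ T, Relation.ReflTransGen (redEdge S T) (rY i) rU :=
    fun i hi => Relation.ReflTransGen.single (show i ∈ T from hi)
  intro a
  induction a using Fin.lastCases with
  | last =>
    obtain ⟨i, hi, hj⟩ := h ⟨0, hN⟩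
    have h1 := (hlast _).trans (hxy _ _ hj)
    exact ⟨i, hi, ⟨h1, (hyu i hi).trans hul⟩, h1.trans (hyu i hi), hul⟩
  | cast j =>
    obtain ⟨i, hi, hj⟩ := h j
    have h1 := hxy _ _ hj
    have h2 := hul.trans (hlast j)
    exact ⟨i, hi, ⟨h1, (hyu i hi).trans h2⟩, h1.trans (hyu i hi), h2⟩

/-- an `ε`-optimal feedback selection (a `T` satisfying condition
(a) of weight at most `ε` times the optimal such weight) is an `ε`-optimal
weighted set cover. -/
theorem reduction_eps_optimal {N r : ℕ} (hN : 1 ≤ N) (hr : 1 ≤ r)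
    (S : Fin r → Finset (Fin N)) (hcover : ∀ x : Fin N, ∃ i : Fin r, x ∈ S i)
    (w : Fin r → NNReal) (ε : NNReal) (hε : 1 ≤ ε)
    (T : Finset (Fin r)) (hT : redCondA S T)
    (happrox : ∑ i ∈ T, w i ≤
      ε * sInf {c : NNReal | ∃ T' : Finset (Fin r), redCondA S T' ∧ c = ∑ i ∈ T', w i}) :
    ∑ i ∈ T, w i ≤
      ε * sInf {c : NNReal | ∃ T' : Finset (Fin r),
        (∀ x : Fin N, ∃ i ∈ T', x ∈ S i) ∧ c = ∑ i ∈ T', w i} := by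
  refine happrox.trans (mul_le_mul_right ?_ ε)
  refine csInf_le_csInf (OrderBot.bddBelow _) ?_ ?_
  · exact ⟨_, Finset.univ, fun x => (hcover x).imp fun i hi => ⟨Finset.mem_univ i, hi⟩, rfl⟩
  · rintro c ⟨T', hT', rfl⟩
    exact ⟨T', redCondA_of_cover hN S T' hT', rfl⟩
end

section
/- Suppose the state digraph has a line condensation C_1,…,C_ℓ, and let K ⊆ {1,…,m}×{1,…,p} be a feedback set. A state vertex x ∈ C_k lies in the same strongly connected component of the closed-loop digraph as both endpoints y_j and u_i of some feedback edge with (i,j) ∈ K if and only if there exist (i,j) ∈ K and indices q ≤ k ≤ r such that some input edge goes from u_i to a state in C_q and some output edge goes from a state in C_r to y_j. -/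
/-- Vertices of a structured system: states `x_1,…,x_n`, inputs `u_1,…,u_m`,
outputs `y_1,…,y_p`. -/
abbrev SVert (n m p : ℕ) : Type := Fin n ⊕ Fin m ⊕ Fin p

/-- State vertex. -/
def stX {n m p : ℕ} (a : Fin n) : SVert n m p := Sum.inl a

/-- Input vertex. -/
def stU {n m p : ℕ} (i : Fin m) : SVert n m p := Sum.inr (Sum.inl i)

/-- Output vertex. -/
def stY {n m p : ℕ} (j : Fin p) : SVert n m p := Sum.inr (Sum.inr j)

/-- Edge relation of the closed-loop digraph: state edges (given by `A`), input
edges `u_i → x_c` (given by `B`), output edges `x_a → y_j` (given by `Co`), and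
feedback edges `y_j → u_i` for `(i, j) ∈ K`. -/
def closedEdge {n m p : ℕ} (A : Fin n → Fin n → Prop) (B : Fin m → Fin n → Prop)
    (Co : Fin n → Fin p → Prop) (K : Finset (Fin m × Fin p)) :
    SVert n m p → SVert n m p → Prop
  | Sum.inl a, Sum.inl c => A a c
  | Sum.inr (Sum.inl i), Sum.inl c => B i c
  | Sum.inl a, Sum.inr (Sum.inr j) => Co a j
  | Sum.inr (Sum.inr j), Sum.inr (Sum.inl i) => (i, j) ∈ K
  | _, _ => False

/-- Condition (a): every state vertex lies in the same SCC of the closed-loop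
digraph as both endpoints `u_i`, `y_j` of some feedback edge `(i, j) ∈ K`. -/
def condA {n m p : ℕ} (A : Fin n → Fin n → Prop) (B : Fin m → Fin n → Prop)
    (Co : Fin n → Fin p → Prop) (K : Finset (Fin m × Fin p)) : Prop :=
  ∀ a : Fin n, ∃ e ∈ K,
    sameSCC (closedEdge A B Co K) (stX a) (stU e.1) ∧
    sameSCC (closedEdge A B Co K) (stX a) (stY e.2)

/-- Condition (b): a collection of vertex-disjoint directed cycles of the
closed-loop digraph covers all state vertices.  Encoded as: there is a set `S`
of vertices containing all state vertices and a map `f` permuting `S` such that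
`v → f v` is an edge for every `v ∈ S` (the cycles of `f` are the cycle
collection). -/
def condB {n m p : ℕ} (A : Fin n → Fin n → Prop) (B : Fin m → Fin n → Prop)
    (Co : Fin n → Fin p → Prop) (K : Finset (Fin m × Fin p)) : Prop :=
  ∃ (S : Set (SVert n m p)) (f : SVert n m p → SVert n m p),
    Set.BijOn f S S ∧ (∀ a : Fin n, stX a ∈ S) ∧
    ∀ v ∈ S, closedEdge A B Co K v (f v)

/-- Cost of a feedback set under cost matrix `P`. -/
def fcost {m p : ℕ} (P : Fin m → Fin p → NNReal) (K : Finset (Fin m × Fin p)) : NNReal :=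
  ∑ e ∈ K, P e.1 e.2

/-- `C : Fin n → Fin ℓ` (assigning each state its class) is a line condensation
of the state digraph: classes are nonempty, each class induces a strongly
connected subgraph, every state edge stays in a class or goes from `C_k` to
`C_{k+1}`, and each consecutive pair of classes is linked by a state edge. -/
structure IsLineCondensation {n : ℕ} (A : Fin n → Fin n → Prop) (ℓ : ℕ)
    (C : Fin n → Fin ℓ) : Prop where
  nonempty : ∀ k : Fin ℓ, ∃ a : Fin n, C a = k
  strong : ∀ a c : Fin n, C a = C c →
    Relation.ReflTransGen (fun v w => A v w ∧ C v = C a ∧ C w = C a) a c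
  step : ∀ a c : Fin n, A a c → C c = C a ∨ (C c : ℕ) = (C a : ℕ) + 1
  linked : ∀ k : Fin ℓ, (k : ℕ) + 1 < ℓ →
    ∃ a c : Fin n, A a c ∧ C a = k ∧ (C c : ℕ) = (k : ℕ) + 1

/-- The feedback set `K` covers class `C_k`: some `(i, j) ∈ K` admits indices
`q ≤ k ≤ r` with an input edge from `u_i` into `C_q` and an output edge from
`C_r` to `y_j`. -/
def coversSCC {n m p ℓ : ℕ} (B : Fin m → Fin n → Prop) (Co : Fin n → Fin p → Prop)
    (C : Fin n → Fin ℓ) (K : Finset (Fin m × Fin p)) (k : Fin ℓ) : Prop :=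
  ∃ e ∈ K, ∃ q r : Fin ℓ, q ≤ k ∧ k ≤ r ∧
    (∃ s : Fin n, B e.1 s ∧ C s = q) ∧ (∃ s : Fin n, Co s e.2 ∧ C s = r)

theorem reach_mono_aux {n m p ℓ : ℕ}
    (A : Fin n → Fin n → Prop) (B : Fin m → Fin n → Prop) (Co : Fin n → Fin p → Prop)
    (C : Fin n → Fin ℓ) (h : IsLineCondensation A ℓ C)
    (K : Finset (Fin m × Fin p)) (d : ℕ) : ∀ a c : Fin n, (C c : ℕ) = (C a : ℕ) + d →
    Relation.ReflTransGen (closedEdge A B Co K) (stX a) (stX c) := by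
  have strong : ∀ a c : Fin n, C a = C c →
      Relation.ReflTransGen (closedEdge A B Co K) (stX a) (stX c) := by
    intro a c hac
    exact Relation.ReflTransGen.lift (p := closedEdge A B Co K) stX
      (fun v w hvw => hvw.1) _ _ (h.strong a c hac)
  induction d with
  | zero =>
    intro a c hc
    exact strong a c (Fin.ext (by omega))
  | succ d ih =>
    intro a c hc
    have hlt := (C c).isLt
    obtain ⟨s, t, hA, hs, ht⟩ := h.linked (C a) (by omega)
    have h1 : closedEdge A B Co K (stX s) (stX t) := hA
    exact ((strong a s hs.symm).tail h1).trans (ih t c (by omega))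

/-- under a line condensation, a state `a ∈ C_k` lies in the same
SCC of the closed-loop digraph as both endpoints of some feedback edge of `K`
iff some `(i, j) ∈ K` has an input edge into some `C_q` and an output edge from
some `C_r` with `q ≤ k ≤ r`. -/
theorem line_state_in_feedback_scc_iff {n m p ℓ : ℕ}
    (A : Fin n → Fin n → Prop) (B : Fin m → Fin n → Prop) (Co : Fin n → Fin p → Prop)
    (C : Fin n → Fin ℓ) (h : IsLineCondensation A ℓ C)
    (K : Finset (Fin m × Fin p)) (a : Fin n) :
    (∃ e ∈ K, sameSCC (closedEdge A B Co K) (stX a) (stU e.1) ∧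
        sameSCC (closedEdge A B Co K) (stX a) (stY e.2)) ↔
      coversSCC B Co C K (C a) := by
  constructor
  · rintro ⟨e, he, ⟨hau, hua⟩, -⟩
    by_contra hn
    have key : ∀ i j s t, (i, j) ∈ K → Co s j → C a ≤ C s → B i t → C a < C t := by
      intro i j s t hK hs hle ht
      by_contra hlt
      exact hn ⟨(i, j), hK, C t, C s, not_lt.mp hlt, hle, ⟨t, ht, rfl⟩, ⟨s, hs, rfl⟩⟩
    have hmono : ∀ x z, A x z → C x ≤ C z := by
      intro x z hxz
      rcases h.step x z hxz with h1 | h1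
      · exact h1.ge
      · exact Fin.le_def.mpr (by omega)
    let PU : Fin m → Prop := fun i => ∃ j s, (i, j) ∈ K ∧ Co s j ∧ C a ≤ C s
    let PY : Fin p → Prop := fun j => ∃ s, Co s j ∧ C a ≤ C s
    let I1 : SVert n m p → Prop := Sum.elim (fun x => C a ≤ C x) (Sum.elim PU PY)
    let I2 : SVert n m p → Prop := Sum.elim (fun x => C a < C x) (Sum.elim PU PY)
    have step1 : ∀ v w, closedEdge A B Co K v w → I1 v → I1 w := by
      rintro (x | i | j) (z | i' | j') hvw hv
      · exact le_trans hv (hmono x z hvw)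
      · exact hvw.elim
      · exact ⟨x, hvw, hv⟩
      · obtain ⟨j, s, h1, h2, h3⟩ := hv
        exact (key i j s z h1 h2 h3 hvw).le
      · exact hvw.elim
      · exact hvw.elim
      · exact hvw.elim
      · obtain ⟨s, h2, h3⟩ := hv
        exact ⟨j, s, hvw, h2, h3⟩
      · exact hvw.elim
    have step2 : ∀ v w, closedEdge A B Co K v w → I2 v → I2 w := by
      rintro (x | i | j) (z | i' | j') hvw hv
      · exact lt_of_lt_of_le hv (hmono x z hvw)
      · exact hvw.elim
      · exact ⟨x, hvw, le_of_lt hv⟩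
      · obtain ⟨j, s, h1, h2, h3⟩ := hv
        exact key i j s z h1 h2 h3 hvw
      · exact hvw.elim
      · exact hvw.elim
      · exact hvw.elim
      · obtain ⟨s, h2, h3⟩ := hv
        exact ⟨j, s, hvw, h2, h3⟩
      · exact hvw.elim
    have r1 : ∀ v, Relation.ReflTransGen (closedEdge A B Co K) (stX a) v → I1 v := by
      intro v hv
      induction hv with
      | refl => exact le_refl (C a)
      | tail _ hb ih => exact step1 _ _ hb ih
    have hu : PU e.1 := r1 _ hau
    have r2 : ∀ v, Relation.ReflTransGen (closedEdge A B Co K) (stU e.1) v → I2 v := by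
      intro v hv
      induction hv with
      | refl => exact hu
      | tail _ hb ih => exact step2 _ _ hb ih
    exact lt_irrefl (C a) (r2 _ hua)
  · rintro ⟨e, he, q, r, hq, hr, ⟨s, hs, rfl⟩, ⟨t, ht, rfl⟩⟩
    have hus : closedEdge A B Co K (stU e.1) (stX s) := hs
    have hty : closedEdge A B Co K (stX t) (stY e.2) := ht
    have hyu : closedEdge A B Co K (stY e.2) (stU e.1) := he
    have hq' := Fin.le_def.mp hq
    have hr' := Fin.le_def.mp hr
    have hsa := reach_mono_aux A B Co C h K ((C a : ℕ) - C s) s a (by omega)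
    have hat := reach_mono_aux A B Co C h K ((C t : ℕ) - C a) a t (by omega)
    have hua := hsa.head hus
    have hay := hat.tail hty
    exact ⟨e, he, ⟨hay.tail hyu, hua⟩, ⟨hay, hua.head hyu⟩⟩
end

section
/- Suppose the state digraph has a line condensation C_1,…,C_ℓ. A feedback set K satisfies condition (a) — every state vertex lies in the same strongly connected component of the closed-loop digraph as both endpoints of some feedback edge of K — if and only if for every k ∈ {1,…,ℓ} there exist (i,j) ∈ K and indices q ≤ k ≤ r such that some input edge goes from u_i to a state in C_q and some output edge goes from a state in C_r to y_j. -/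
/-- In a line condensation, states of later classes are reachable. -/
theorem line_reach {n ℓ : ℕ} {A : Fin n → Fin n → Prop} {C : Fin n → Fin ℓ}
    (h : IsLineCondensation A ℓ C) (d : ℕ) :
    ∀ a c : Fin n, (C c : ℕ) = (C a : ℕ) + d → Relation.ReflTransGen A a c := by
  have hs : ∀ a c : Fin n, C a = C c → Relation.ReflTransGen A a c := fun a c hac =>
    Relation.ReflTransGen.mono (fun _ _ hvw => hvw.1) _ _ (h.strong a c hac)
  induction d with
  | zero =>
    intro a c hac
    exact hs a c (Fin.ext (by omega))
  | succ d ih =>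
    intro a c hac
    obtain ⟨v, w, hvw, hv, hw⟩ := h.linked (C a) (by have := (C c).isLt; omega)
    exact ((hs a v hv.symm).tail hvw).trans (ih w c (by omega))

/-- Invariant used to show that an uncovered class cannot be returned to. -/
def lineInv {n m p ℓ : ℕ} (Co : Fin n → Fin p → Prop) (C : Fin n → Fin ℓ)
    (K : Finset (Fin m × Fin p)) (k : Fin ℓ) (t : ℕ) : SVert n m p → Prop
  | Sum.inl a => t ≤ (C a : ℕ)
  | Sum.inr (Sum.inl i) => ∃ j, (i, j) ∈ K ∧ ∃ s, Co s j ∧ k ≤ C s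
  | Sum.inr (Sum.inr j) => ∃ s, Co s j ∧ k ≤ C s

theorem lineInv_reach {n m p ℓ : ℕ} {A : Fin n → Fin n → Prop} {B : Fin m → Fin n → Prop}
    {Co : Fin n → Fin p → Prop} {C : Fin n → Fin ℓ} (h : IsLineCondensation A ℓ C)
    {K : Finset (Fin m × Fin p)} {k : Fin ℓ} (hk : ¬ coversSCC B Co C K k)
    {t : ℕ} (h1 : (k : ℕ) ≤ t) (h2 : t ≤ (k : ℕ) + 1) {v w : SVert n m p}
    (hvw : Relation.ReflTransGen (closedEdge A B Co K) v w)
    (hv : lineInv Co C K k t v) : lineInv Co C K k t w := by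
  induction hvw with
  | refl => exact hv
  | @tail b c _ hbc ih =>
    rcases b with a | i | j <;> rcases c with a₂ | i₂ | j₂ <;>
      simp only [closedEdge, lineInv] at hbc ih ⊢
    · rcases h.step a a₂ hbc with hh | hh
      · rw [hh]; exact ih
      · omega
    · exact ⟨a, hbc, Fin.le_def.2 (by omega)⟩
    · obtain ⟨j, hj, s, hs, hks⟩ := ih
      by_contra hlt
      exact hk ⟨(i, j), hj, C a₂, C s, Fin.le_def.2 (by omega), hks, ⟨a₂, hbc, rfl⟩, ⟨s, hs, rfl⟩⟩
    · exact ⟨j, hbc, ih⟩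

/-- under a line condensation, `K` satisfies condition (a) iff for
every class index `k` some feedback edge `(i, j) ∈ K` has an input edge into
some `C_q` and an output edge from some `C_r` with `q ≤ k ≤ r`. -/
theorem line_condA_iff_covers {n m p ℓ : ℕ}
    (A : Fin n → Fin n → Prop) (B : Fin m → Fin n → Prop) (Co : Fin n → Fin p → Prop)
    (C : Fin n → Fin ℓ) (h : IsLineCondensation A ℓ C)
    (K : Finset (Fin m × Fin p)) :
    condA A B Co K ↔ ∀ k : Fin ℓ, coversSCC B Co C K k := by
  constructor
  · intro hA k
    by_contra hk
    obtain ⟨a, ha⟩ := h.nonempty k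
    obtain ⟨e, _, ⟨hau, hua⟩, _⟩ := hA a
    have hu : lineInv Co C K k (k : ℕ) (stU e.1 : SVert n m p) :=
      lineInv_reach h hk le_rfl (Nat.le_succ _) hau (by simp [lineInv, stX, ha])
    have hx : lineInv Co C K k ((k : ℕ) + 1) (stX a : SVert n m p) :=
      lineInv_reach h hk (Nat.le_succ _) le_rfl hua hu
    simp [lineInv, stX, ha] at hx
  · intro hc a
    obtain ⟨e, he, q, r, hq, hr, ⟨s, hs, rfl⟩, ⟨s₂, hs₂, rfl⟩⟩ := hc (C a)
    have key : ∀ b c : Fin n, C b ≤ C c →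
        Relation.ReflTransGen (closedEdge A B Co K) (stX b) (stX c) := by
      intro b c hbc
      have hle := Fin.le_def.1 hbc
      exact Relation.ReflTransGen.lift (stX : Fin n → SVert n m p) (fun _ _ hh => hh) _ _
        (line_reach h ((C c : ℕ) - (C b : ℕ)) b c (by omega))
    have e1 : closedEdge A B Co K (stX s₂) (stY e.2) := hs₂
    have e2 : closedEdge A B Co K (stY e.2) (stU e.1) := he
    have e3 : closedEdge A B Co K (stU e.1) (stX s) := hs
    have r1 := (key a s₂ hr).tail e1
    have r2 := Relation.ReflTransGen.head e3 (key s a hq)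
    exact ⟨e, he, ⟨r1.tail e2, r2⟩, ⟨r1, Relation.ReflTransGen.head e2 r2⟩⟩
end

section
/- Suppose the state digraph has a line condensation C_1,…,C_ℓ and there is a permutation σ of the state vertices such that x → σ(x) is a state edge for every state vertex x. Let P ∈ ℝ_{≥0}^{m×p} and let K* minimize P(K) = Σ_{(i,j)∈K} P_{ij} among all feedback sets K satisfying conditions (a) and (b). Then for every k ∈ {1,…,ℓ} there exist (i,j) ∈ K* and indices q ≤ k ≤ r such that some input edge goes from u_i to a state in C_q and some output edge goes from a state in C_r to y_j (i.e., K* contains an edge of the set A_k of feedback edges that can cover C_k). -/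
/-- under a line condensation and a perfect matching of the state
bipartite graph (a permutation `σ` of the states with a state edge `x → σ x`
for every `x`), any minimum-cost feedback set `K*` satisfying conditions (a)
and (b) contains, for each class `C_k`, an edge of the set `A_k` of feedback
edges that can cover `C_k`. -/
theorem line_optimal_meets_every_Ak {n m p ℓ : ℕ}
    (A : Fin n → Fin n → Prop) (B : Fin m → Fin n → Prop) (Co : Fin n → Fin p → Prop)
    (C : Fin n → Fin ℓ) (h : IsLineCondensation A ℓ C)
    (σ : Equiv.Perm (Fin n)) (hσ : ∀ a : Fin n, A a (σ a))
    (P : Fin m → Fin p → NNReal) (Kstar : Finset (Fin m × Fin p))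
    (hfeas : condA A B Co Kstar ∧ condB A B Co Kstar)
    (hopt : ∀ K : Finset (Fin m × Fin p),
      condA A B Co K ∧ condB A B Co K → fcost P Kstar ≤ fcost P K) :
    ∀ k : Fin ℓ, coversSCC B Co C Kstar k := by
  intro k
  by_contra hk
  obtain ⟨a, ha⟩ := h.nonempty k
  obtain ⟨e, -, ⟨h1, h2⟩, -⟩ := hfeas.1 a
  have hno : ∀ i j s t, (i, j) ∈ Kstar → Co s j → k ≤ C s → B i t → k < C t := by
    intro i j s t hij hs hks ht
    by_contra hlt
    exact hk ⟨(i, j), hij, C t, C s, not_lt.mp hlt, hks, ⟨t, ht, rfl⟩, ⟨s, hs, rfl⟩⟩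
  have hstep : ∀ x y, A x y → C x ≤ C y := by
    intro x y hxy
    rcases h.step x y hxy with h' | h'
    · exact h'.ge
    · exact Fin.le_def.mpr (by omega)
  -- before a feedback edge the class is at least `k`
  let Q1 : SVert n m p → Prop := fun v => match v with
    | Sum.inl x => k ≤ C x
    | Sum.inr (Sum.inl i) => ∀ t, B i t → k < C t
    | Sum.inr (Sum.inr j) => ∃ s, Co s j ∧ k ≤ C s
  -- after a feedback edge the class is above `k`
  let Q2 : SVert n m p → Prop := fun v => match v with
    | Sum.inl x => k < C x
    | Sum.inr (Sum.inl i) => ∀ t, B i t → k < C t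
    | Sum.inr (Sum.inr j) => ∃ s, Co s j ∧ k ≤ C s
  have c1 : ∀ v w, closedEdge A B Co Kstar v w → Q1 v → Q1 w := by
    rintro (x | i | j) (x' | i' | j') hE hQ
    · exact le_trans hQ (hstep _ _ hE)
    · exact hE.elim
    · exact ⟨x, hE, hQ⟩
    · exact (hQ _ hE).le
    · exact hE.elim
    · exact hE.elim
    · exact hE.elim
    · obtain ⟨s, hs, hks⟩ := hQ
      exact fun t ht => hno _ _ _ _ hE hs hks ht
    · exact hE.elim
  have c2 : ∀ v w, closedEdge A B Co Kstar v w → Q2 v → Q2 w := by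
    rintro (x | i | j) (x' | i' | j') hE hQ
    · exact lt_of_lt_of_le hQ (hstep _ _ hE)
    · exact hE.elim
    · exact ⟨x, hE, le_of_lt hQ⟩
    · exact hQ _ hE
    · exact hE.elim
    · exact hE.elim
    · exact hE.elim
    · obtain ⟨s, hs, hks⟩ := hQ
      exact fun t ht => hno _ _ _ _ hE hs hks ht
    · exact hE.elim
  have lift : ∀ Q : SVert n m p → Prop,
      (∀ v w, closedEdge A B Co Kstar v w → Q v → Q w) →
      ∀ v w, Relation.ReflTransGen (closedEdge A B Co Kstar) v w → Q v → Q w := by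
    intro Q hQ v w hvw h0
    induction hvw with
    | refl => exact h0
    | tail _ hE ih => exact hQ _ _ hE ih
  have h0 : Q1 (stX a) := ha.ge
  have q1 : Q1 (stU e.1) := lift Q1 c1 _ _ h1 h0
  have q2 : Q2 (stX a) := lift Q2 c2 _ _ h2 q1
  exact absurd q2 (by change ¬ (k < C a); simp [ha])
end

section
/- For every k with 0 ≤ k ≤ ℓ, the dynamic programming value satisfies W(k) = inf { Σ_{e∈F} w(e) : F ⊆ E and F covers {1,…,k} }. In particular W(ℓ) equals the minimum total weight of a subset of E whose intervals cover {1,…,ℓ}. -/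
open scoped ENNReal

/-- the dynamic-programming value `W k` defined by `W 0 = 0` and
`W k = inf { w e + W (a e - 1) : e ∈ E, a e ≤ k ≤ b e }` (for `1 ≤ k ≤ ℓ`, with
`inf ∅ = ∞`) equals, for every `0 ≤ k ≤ ℓ`, the infimum of `∑_{e ∈ F} w e` over
all `F ⊆ E` whose intervals `[a e, b e]` cover `{1,…,k}`.  In particular `W ℓ`
is the minimum total weight of a subset of `E` covering `{1,…,ℓ}`. -/
theorem dp_value_eq_min_interval_cover {E : Type*} [Fintype E]
    (ℓ : ℕ) (hℓ : 1 ≤ ℓ) (a b : E → ℕ)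
    (ha : ∀ e, 1 ≤ a e) (hab : ∀ e, a e ≤ b e) (hb : ∀ e, b e ≤ ℓ)
    (w : E → ℝ≥0∞) (W : ℕ → ℝ≥0∞) (hW0 : W 0 = 0)
    (hWrec : ∀ k : ℕ, 1 ≤ k → k ≤ ℓ →
      W k = ⨅ e : {e : E // a e ≤ k ∧ k ≤ b e}, (w e.1 + W (a e.1 - 1))) :
    ∀ k : ℕ, k ≤ ℓ →
      W k = sInf {c : ℝ≥0∞ | ∃ F : Finset E,
        (∀ j : ℕ, 1 ≤ j → j ≤ k → ∃ e ∈ F, a e ≤ j ∧ j ≤ b e) ∧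
        c = ∑ e ∈ F, w e} := by
  classical
  intro k
  induction k using Nat.strong_induction_on with
  | _ k ih =>
  intro hk
  rcases Nat.eq_zero_or_pos k with rfl | hpos
  · rw [hW0]
    refine le_antisymm bot_le (sInf_le ⟨∅, ?_, by simp⟩)
    intro j h1 h2
    omega
  apply le_antisymm
  · apply le_sInf
    rintro c ⟨F, hF, rfl⟩
    obtain ⟨e, heF, h1, h2⟩ := hF k hpos le_rfl
    have hae := ha e
    rw [hWrec k hpos hk, ← Finset.add_sum_erase F w heF]
    refine (iInf_le _ (⟨e, h1, h2⟩ : {e : E // a e ≤ k ∧ k ≤ b e})).trans ?_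
    refine add_le_add le_rfl ?_
    rw [ih (a e - 1) (by omega) (by omega)]
    refine sInf_le ⟨F.erase e, ?_, rfl⟩
    intro j hj1 hj2
    obtain ⟨f, hf, h3, h4⟩ := hF j hj1 (by omega)
    refine ⟨f, Finset.mem_erase.2 ⟨?_, hf⟩, h3, h4⟩
    rintro rfl
    omega
  · rw [hWrec k hpos hk]
    apply le_iInf
    rintro ⟨e, h1, h2⟩
    have hae := ha e
    dsimp only
    rw [ih (a e - 1) (by omega) (by omega), ENNReal.add_sInf]
    refine le_iInf₂ ?_
    rintro c ⟨F, hF, rfl⟩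
    have hle : ∑ x ∈ insert e F, w x ≤ w e + ∑ x ∈ F, w x := by
      by_cases he : e ∈ F
      · rw [Finset.insert_eq_of_mem he]
        exact le_add_self
      · rw [Finset.sum_insert he]
    refine le_trans (sInf_le ?_) hle
    refine ⟨insert e F, ?_, rfl⟩
    intro j hj1 hj2
    by_cases hj : a e ≤ j
    · exact ⟨e, Finset.mem_insert_self _ _, hj, by omega⟩
    · obtain ⟨f, hf, h⟩ := hF j hj1 (by omega)
      exact ⟨f, Finset.mem_insert_of_mem hf, h⟩
end

section
/- Let P ∈ ℝ_{≥0}^{m×p}. Suppose K_ab satisfies conditions (a) and (b); suppose K_a satisfies condition (a) with P(K_a) ≤ P(K) for every K satisfying condition (a); and suppose K_b satisfies condition (b) with P(K_b) ≤ P(K) for every K satisfying condition (b). Then the union K_a ∪ K_b satisfies both conditions (a) and (b), and P(K_a ∪ K_b) ≤ P(K_a) + P(K_b) ≤ 2·P(K_ab). In particular, K_a ∪ K_b is a 2-optimal solution of the minimum-cost feedback selection problem. -/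
theorem closedEdge_mono_feedback {n m p : ℕ} (A : Fin n → Fin n → Prop) (B : Fin m → Fin n → Prop)
    (Co : Fin n → Fin p → Prop) {K L : Finset (Fin m × Fin p)} (h : K ⊆ L)
    (v w : SVert n m p) (hvw : closedEdge A B Co K v w) : closedEdge A B Co L v w := by
  rcases v with a | i | j <;> rcases w with c | k | l <;>
    first
    | exact hvw
    | exact h hvw

theorem sameSCC_mono_edges {α : Type*} {E F : α → α → Prop} (h : ∀ a b, E a b → F a b) {a b : α}
    (hab : sameSCC E a b) : sameSCC F a b :=
  ⟨Relation.ReflTransGen.mono h _ _ hab.1, Relation.ReflTransGen.mono h _ _ hab.2⟩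

/-- if `K_ab` satisfies conditions (a) and (b), `K_a` is a
minimum-cost feedback set satisfying condition (a), and `K_b` is a
minimum-cost feedback set satisfying condition (b), then `K_a ∪ K_b` satisfies
both conditions and is 2-optimal:
`P(K_a ∪ K_b) ≤ P(K_a) + P(K_b) ≤ 2 · P(K_ab)`. -/
theorem union_two_optimal {n m p : ℕ}
    (A : Fin n → Fin n → Prop) (B : Fin m → Fin n → Prop) (Co : Fin n → Fin p → Prop)
    (P : Fin m → Fin p → NNReal)
    (Kab Ka Kb : Finset (Fin m × Fin p))
    (hab : condA A B Co Kab ∧ condB A B Co Kab)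
    (haA : condA A B Co Ka)
    (haOpt : ∀ K : Finset (Fin m × Fin p), condA A B Co K → fcost P Ka ≤ fcost P K)
    (hbB : condB A B Co Kb)
    (hbOpt : ∀ K : Finset (Fin m × Fin p), condB A B Co K → fcost P Kb ≤ fcost P K) :
    condA A B Co (Ka ∪ Kb) ∧ condB A B Co (Ka ∪ Kb) ∧
    fcost P (Ka ∪ Kb) ≤ fcost P Ka + fcost P Kb ∧
    fcost P Ka + fcost P Kb ≤ 2 * fcost P Kab := by
  refine ⟨?_, ?_, ?_, ?_⟩
  · intro a
    obtain ⟨e, he, h1, h2⟩ := haA a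
    have hm := closedEdge_mono_feedback A B Co (Finset.subset_union_left (s₁ := Ka) (s₂ := Kb))
    exact ⟨e, Finset.mem_union_left _ he, sameSCC_mono_edges hm h1, sameSCC_mono_edges hm h2⟩
  · obtain ⟨S, f, hf, hS, hE⟩ := hbB
    exact ⟨S, f, hf, hS, fun v hv =>
      closedEdge_mono_feedback A B Co Finset.subset_union_right _ _ (hE v hv)⟩
  · unfold fcost
    rw [← Finset.sum_union_inter]
    exact le_self_add
  · rw [two_mul]
    exact add_le_add (haOpt _ hab.1) (hbOpt _ hab.2)
end

section
/- Suppose the state digraph is strongly connected (and n ≥ 1), there is a permutation σ of the state vertices with a state edge x → σ(x) for every x, and P ∈ ℝ_{≥0}^{m×p}. Then: (1) for any pair (i,j) such that u_i has an input edge to some state vertex and some state vertex has an output edge to y_j, the singleton feedback set K = {(i,j)} satisfies conditions (a) and (b); and (2) the minimum of P(K) over all feedback sets K satisfying conditions (a) and (b) equals the minimum of P_{ij} over all pairs (i,j) such that u_i has an input edge to some state vertex and some state vertex has an output edge to y_j (provided at least one such pair exists). -/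
/-- if the state digraph is strongly connected (irreducible),
`n ≥ 1`, and the state bipartite graph has a perfect matching (a permutation
`σ` of the states with a state edge `x → σ x` for every `x`), then (1) any
singleton feedback set `{(i, j)}` with `u_i` actuating some state and `y_j`
sensing some state satisfies conditions (a) and (b), and (2) the optimal
feedback-selection cost equals the minimum entry `P i j` over such pairs. -/
theorem irreducible_singleton_optimal {n m p : ℕ} (hn : 1 ≤ n)
    (A : Fin n → Fin n → Prop) (B : Fin m → Fin n → Prop) (Co : Fin n → Fin p → Prop)
    (hirr : ∀ a c : Fin n, Relation.ReflTransGen A a c)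
    (σ : Equiv.Perm (Fin n)) (hσ : ∀ a : Fin n, A a (σ a))
    (P : Fin m → Fin p → NNReal)
    (hpair : ∃ i : Fin m, ∃ j : Fin p, (∃ s : Fin n, B i s) ∧ (∃ s : Fin n, Co s j)) :
    (∀ i : Fin m, ∀ j : Fin p, (∃ s : Fin n, B i s) → (∃ s : Fin n, Co s j) →
      condA A B Co {(i, j)} ∧ condB A B Co {(i, j)}) ∧
    sInf {c : NNReal | ∃ K : Finset (Fin m × Fin p),
        condA A B Co K ∧ condB A B Co K ∧ c = fcost P K}
      = sInf {c : NNReal | ∃ i : Fin m, ∃ j : Fin p,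
          (∃ s : Fin n, B i s) ∧ (∃ s : Fin n, Co s j) ∧ c = P i j} := by
  have key : ∀ i : Fin m, ∀ j : Fin p, (∃ s : Fin n, B i s) → (∃ s : Fin n, Co s j) →
      condA A B Co {(i, j)} ∧ condB A B Co {(i, j)} := by
    rintro i j ⟨s, hs⟩ ⟨t, ht⟩
    constructor
    · intro a
      have hst : ∀ a c : Fin n, Relation.ReflTransGen (closedEdge A B Co {(i, j)})
          (stX a) (stX c) := fun a c =>
        Relation.ReflTransGen.lift (p := closedEdge A B Co {(i, j)}) stX
          (fun _ _ h => h) _ _ (hirr a c)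
      have e1 : closedEdge A B Co {(i, j)} (stU i) (stX s) := hs
      have e2 : closedEdge A B Co {(i, j)} (stX t) (stY j) := ht
      have e3 : closedEdge A B Co {(i, j)} (stY j) (stU i) := Finset.mem_singleton_self (i, j)
      have hay := (hst a t).tail e2
      have hua := (hst s a).head e1
      exact ⟨(i, j), Finset.mem_singleton_self _, ⟨hay.tail e3, hua⟩, ⟨hay, hua.head e3⟩⟩
    · refine ⟨Set.range Sum.inl, Sum.map σ id, ⟨?_, ?_, ?_⟩, fun a => ⟨a, rfl⟩, ?_⟩
      · rintro _ ⟨a, rfl⟩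
        exact ⟨σ a, rfl⟩
      · rintro _ ⟨a, rfl⟩ _ ⟨b, rfl⟩ h
        simpa using h
      · rintro _ ⟨a, rfl⟩
        exact ⟨Sum.inl (σ.symm a), ⟨_, rfl⟩, by simp⟩
      · rintro _ ⟨a, rfl⟩
        exact hσ a
  refine ⟨key, le_antisymm ?_ ?_⟩
  · obtain ⟨i, j, hi, hj⟩ := hpair
    refine le_csInf ⟨P i j, i, j, hi, hj, rfl⟩ ?_
    rintro c ⟨i, j, hi, hj, rfl⟩
    refine csInf_le (OrderBot.bddBelow _) ⟨{(i, j)}, (key i j hi hj).1, (key i j hi hj).2, ?_⟩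
    simp [fcost]
  · obtain ⟨i, j, hi, hj⟩ := hpair
    refine le_csInf ⟨_, {(i, j)}, (key i j hi hj).1, (key i j hi hj).2, rfl⟩ ?_
    rintro c ⟨K, hA, -, rfl⟩
    obtain ⟨e, heK, ⟨-, hu⟩, ⟨hy, -⟩⟩ := hA ⟨0, hn⟩
    have h1 : ∃ s, B e.1 s := by
      rcases hu.cases_head with h | ⟨v, hv, -⟩
      · simp [stU, stX] at h
      · rcases v with v | v | v
        · exact ⟨v, hv⟩
        · exact hv.elim
        · exact hv.elim
    have h2 : ∃ s, Co s e.2 := by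
      rcases hy.cases_tail with h | ⟨v, -, hv⟩
      · simp [stY, stX] at h
      · rcases v with v | v | v
        · exact ⟨v, hv⟩
        · exact hv.elim
        · exact hv.elim
    refine le_trans (b := P e.1 e.2)
      (csInf_le (OrderBot.bddBelow _) ⟨e.1, e.2, h1, h2, rfl⟩) ?_
    exact Finset.single_le_sum (f := fun e : Fin m × Fin p => P e.1 e.2)
      (fun _ _ => zero_le) heK
end

section
/- Let C be a set of state vertices that induces a strongly connected subgraph of the state digraph and has no state edge from a vertex of C to a state vertex outside C (a non-bottom-linked SCC). If some state vertex x ∈ C lies in the same strongly connected component of the closed-loop digraph as both endpoints of some feedback edge of K, then there exist (i',j') ∈ K and a state vertex x' ∈ C with an output edge x' → y_{j'}; that is, some output that is fed back senses a state of C. -/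
/-- let `C` be a set of states inducing a strongly connected
subgraph of the state digraph with no state edge leaving `C` (a
non-bottom-linked SCC).  If some state of `C` lies in the same SCC of the
closed-loop digraph as both endpoints of some feedback edge of `K`, then some
output that is fed back (some `(i', j') ∈ K`) senses a state of `C`. -/
theorem non_bottom_scc_sensed {n m p : ℕ}
    (A : Fin n → Fin n → Prop) (B : Fin m → Fin n → Prop) (Co : Fin n → Fin p → Prop)
    (K : Finset (Fin m × Fin p)) (C : Set (Fin n))
    (hstrong : ∀ a ∈ C, ∀ c ∈ C,
      Relation.ReflTransGen (fun v w => A v w ∧ v ∈ C ∧ w ∈ C) a c)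
    (hnb : ∀ a ∈ C, ∀ c : Fin n, A a c → c ∈ C)
    (hx : ∃ a ∈ C, ∃ e ∈ K,
      sameSCC (closedEdge A B Co K) (stX a) (stU e.1) ∧
      sameSCC (closedEdge A B Co K) (stX a) (stY e.2)) :
    ∃ e ∈ K, ∃ a ∈ C, Co a e.2 := by
  by_contra hno
  obtain ⟨a, ha, e, _, ⟨hu, _⟩, _⟩ := hx
  -- Everything reachable from `a` is a state of `C` or an output sensing `C`.
  have key : ∀ v, Relation.ReflTransGen (closedEdge A B Co K) (stX a) v →
      (∃ c ∈ C, v = stX c) ∨ (∃ j, v = stY j ∧ ∃ c ∈ C, Co c j) := by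
    intro v hv
    induction hv with
    | refl => exact Or.inl ⟨a, ha, rfl⟩
    | @tail b w _ hbw ih =>
      rcases ih with ⟨c, hc, rfl⟩ | ⟨j, rfl, c, hc, hcj⟩
      · rcases w with d | i | j
        · exact Or.inl ⟨d, hnb c hc d hbw, rfl⟩
        · exact hbw.elim
        · exact Or.inr ⟨j, rfl, c, hc, hbw⟩
      · rcases w with d | i | j'
        · exact hbw.elim
        · exact (hno ⟨(i, j), hbw, c, hc, hcj⟩).elim
        · exact hbw.elim
  rcases key _ hu with ⟨c, _, h⟩ | ⟨j, h, _⟩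
  · simp [stU, stX] at h
  · simp [stU, stY] at h
end

section
/- Suppose there is a single input u_1 (m = 1) and every state vertex is reachable in the state digraph from some state vertex actuated by u_1 (i.e., from some x with an input edge u_1 → x). Let C^b_1,…,C^b_β be the non-bottom-linked SCCs of the state digraph (the maximal strongly connected classes of state vertices with no outgoing state edge to a state outside the class). If T ⊆ {1,…,p} is such that for every k ∈ {1,…,β} there exist j ∈ T and a state x ∈ C^b_k with an output edge x → y_j, then the feedback set K = {(1,j) : j ∈ T} satisfies condition (a). -/
/-- In a finite digraph every vertex reaches a vertex of a sink class. -/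
theorem exists_reach_terminal {α : Type*} [Finite α] (A : α → α → Prop) (a : α) :
    ∃ c, Relation.ReflTransGen A a c ∧
      ∀ d, Relation.ReflTransGen A c d → Relation.ReflTransGen A d c := by
  let r : α → α → Prop := fun x y =>
    Relation.ReflTransGen A y x ∧ ¬ Relation.ReflTransGen A x y
  have : IsTrans α r := ⟨fun x y z h1 h2 => ⟨h2.1.trans h1.1, fun h => h1.2 (h.trans h2.1) |>.elim⟩⟩
  have : Std.Irrefl r := ⟨fun x h => h.2 h.1⟩
  have wf : WellFounded r := Finite.wellFounded_of_trans_of_irrefl r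
  obtain ⟨c, hc, hmin⟩ := wf.has_min {c | Relation.ReflTransGen A a c} ⟨a, .refl⟩
  refine ⟨c, hc, fun d hd => ?_⟩
  by_contra h
  exact hmin d (Relation.ReflTransGen.trans hc hd) ⟨hd, h⟩

/-- single-input case.  Suppose every state is reachable in the
state digraph from some state actuated by `u_1`, and `Cb 1, …, Cb β` are the
non-bottom-linked SCCs of the state digraph (each is an SCC with no outgoing
state edge, and every state whose SCC is non-bottom-linked lies in some
`Cb k`).  If for every `k` some output `y_j` with `j ∈ T` senses a state of
`Cb k`, then the feedback set `{(1, j) : j ∈ T}` satisfies condition (a). -/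
theorem single_input_cover_implies_condA {n p β : ℕ}
    (A : Fin n → Fin n → Prop) (B : Fin 1 → Fin n → Prop) (Co : Fin n → Fin p → Prop)
    (hreach : ∀ a : Fin n, ∃ s : Fin n, B 0 s ∧ Relation.ReflTransGen A s a)
    (Cb : Fin β → Set (Fin n))
    (hscc : ∀ k : Fin β, ∃ a ∈ Cb k, ∀ c : Fin n,
      c ∈ Cb k ↔ (Relation.ReflTransGen A a c ∧ Relation.ReflTransGen A c a))
    (hnb : ∀ k : Fin β, ∀ a ∈ Cb k, ∀ c : Fin n, A a c → c ∈ Cb k)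
    (hall : ∀ a : Fin n,
      (∀ c : Fin n, Relation.ReflTransGen A a c → Relation.ReflTransGen A c a) →
      ∃ k : Fin β, a ∈ Cb k)
    (T : Finset (Fin p))
    (hT : ∀ k : Fin β, ∃ j ∈ T, ∃ a ∈ Cb k, Co a j) :
    condA A B Co (T.image fun j => ((0 : Fin 1), j)) := by
  intro a
  obtain ⟨c, hac, hterm⟩ := exists_reach_terminal A a
  obtain ⟨k, hck⟩ := hall c hterm
  obtain ⟨j, hj, b, hb, hbj⟩ := hT k
  obtain ⟨r, _, hr⟩ := hscc k
  have hab : Relation.ReflTransGen A a b :=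
    hac.trans (((hr c).1 hck).2.trans ((hr b).1 hb).1)
  obtain ⟨s, hs, hsa⟩ := hreach a
  have hK : ((0 : Fin 1), j) ∈ T.image fun j => ((0 : Fin 1), j) :=
    Finset.mem_image_of_mem _ hj
  generalize (T.image fun j => ((0 : Fin 1), j)) = K at hK ⊢
  have lft : ∀ {x y : Fin n}, Relation.ReflTransGen A x y →
      Relation.ReflTransGen (closedEdge A B Co K) (stX x) (stX y) :=
    fun h => Relation.ReflTransGen.lift stX (fun _ _ h => h) _ _ h
  have hay : Relation.ReflTransGen (closedEdge A B Co K) (stX a) (stY j) :=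
    (lft hab).tail hbj
  have hyu : Relation.ReflTransGen (closedEdge A B Co K) (stY j) (stU 0) :=
    .single hK
  have hua : Relation.ReflTransGen (closedEdge A B Co K) (stU 0) (stX a) :=
    .head (b := stX s) hs (lft hsa)
  exact ⟨(0, j), hK, ⟨hay.trans hyu, hua⟩, ⟨hay, hyu.trans hua⟩⟩
end

section
/- Suppose there is a single input u_1 (m = 1), every state vertex is reachable in the state digraph from some state vertex actuated by u_1, and there is a permutation σ of the state vertices with a state edge x → σ(x) for every x. Let C^b_1,…,C^b_β be the non-bottom-linked SCCs of the state digraph, for each output j let S_j = { k ∈ {1,…,β} : some state x ∈ C^b_k has an output edge x → y_j }, and let P ∈ ℝ_{≥0}^{1×p}. Then: (1) for T ⊆ {1,…,p}, the feedback set K(T) = {(1,j) : j ∈ T} satisfies conditions (a) and (b) if and only if ⋃_{j∈T} S_j = {1,…,β}; and (2) the minimum of P(K) over all feedback sets K satisfying conditions (a) and (b) equals the minimum of Σ_{j∈T} P_{1j} over all T ⊆ {1,…,p} with ⋃_{j∈T} S_j = {1,…,β}; that is, the optimal feedback selection cost equals the optimal weight of the associated weighted set cover. -/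
open Relation in
lemma exists_terminal {n : ℕ} (A : Fin n → Fin n → Prop) (a : Fin n) :
    ∃ c, ReflTransGen A a c ∧ ∀ d, ReflTransGen A c d → ReflTransGen A d c := by
  obtain ⟨c, hc, hmin⟩ := Set.exists_min_image {c | ReflTransGen A a c}
    (fun c => Set.ncard {d | ReflTransGen A c d}) (Set.toFinite _) ⟨a, ReflTransGen.refl⟩
  refine ⟨c, hc, fun d hd => ?_⟩
  by_contra hdc
  have h1 := hmin d (ReflTransGen.trans hc hd)
  have h2 : Set.ncard {e | ReflTransGen A d e} < Set.ncard {e | ReflTransGen A c e} := by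
    apply Set.ncard_lt_ncard _ (Set.toFinite _)
    refine ⟨fun e he => ReflTransGen.trans hd he, fun h => hdc (h ?_)⟩
    exact ReflTransGen.refl
  exact absurd h1 (not_le.mpr h2)

open Relation in
lemma closed_of_state {n m p : ℕ} {A : Fin n → Fin n → Prop} {B : Fin m → Fin n → Prop}
    {Co : Fin n → Fin p → Prop} {K : Finset (Fin m × Fin p)} {a c : Fin n}
    (h : ReflTransGen A a c) : ReflTransGen (closedEdge A B Co K) (stX a) (stX c) := by
  induction h with
  | refl => exact ReflTransGen.refl
  | tail _ hbc ih => exact ih.tail (by exact hbc)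

open Relation in
lemma cover_of_escape {n m p : ℕ} {A : Fin n → Fin n → Prop} {B : Fin m → Fin n → Prop}
    {Co : Fin n → Fin p → Prop} {K : Finset (Fin m × Fin p)} {C : Set (Fin n)}
    (hC : ∀ a ∈ C, ∀ c, A a c → c ∈ C) {a : Fin n} (ha : a ∈ C) {v : SVert n m p}
    (h : ReflTransGen (closedEdge A B Co K) (stX a) v) :
    (∃ e ∈ K, ∃ a ∈ C, Co a e.2) ∨ (∃ c ∈ C, v = stX c) ∨
      (∃ j, v = stY j ∧ ∃ c ∈ C, Co c j) := by
  induction h with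
  | refl => exact Or.inr (Or.inl ⟨a, ha, rfl⟩)
  | @tail v w _ hvw ih =>
    rcases ih with h | ⟨c, hc, rfl⟩ | ⟨j, rfl, c, hc, hj⟩
    · exact Or.inl h
    · rcases w with d | i | j
      · exact Or.inr (Or.inl ⟨d, hC c hc d hvw, rfl⟩)
      · exact hvw.elim
      · exact Or.inr (Or.inr ⟨j, rfl, c, hc, hvw⟩)
    · rcases w with d | i | j'
      · exact hvw.elim
      · exact Or.inl ⟨(i, j), hvw, c, hc, hj⟩
      · exact hvw.elim

/-- single-input case with a perfect matching of the state
bipartite graph.  With `Cb 1, …, Cb β` the non-bottom-linked SCCs of the state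
digraph and `S_j = {k : some state of Cb k is sensed by y_j}`: (1) the feedback
set `{(1, j) : j ∈ T}` satisfies conditions (a) and (b) iff the sets `S_j`,
`j ∈ T`, cover `{1,…,β}`; and (2) the optimal feedback-selection cost equals
the optimal weight of the associated weighted set cover. -/
theorem single_input_setCover_equivalence {n p β : ℕ}
    (A : Fin n → Fin n → Prop) (B : Fin 1 → Fin n → Prop) (Co : Fin n → Fin p → Prop)
    (hreach : ∀ a : Fin n, ∃ s : Fin n, B 0 s ∧ Relation.ReflTransGen A s a)
    (σ : Equiv.Perm (Fin n)) (hσ : ∀ a : Fin n, A a (σ a))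
    (Cb : Fin β → Set (Fin n))
    (hscc : ∀ k : Fin β, ∃ a ∈ Cb k, ∀ c : Fin n,
      c ∈ Cb k ↔ (Relation.ReflTransGen A a c ∧ Relation.ReflTransGen A c a))
    (hnb : ∀ k : Fin β, ∀ a ∈ Cb k, ∀ c : Fin n, A a c → c ∈ Cb k)
    (hall : ∀ a : Fin n,
      (∀ c : Fin n, Relation.ReflTransGen A a c → Relation.ReflTransGen A c a) →
      ∃ k : Fin β, a ∈ Cb k)
    (P : Fin 1 → Fin p → NNReal) :
    (∀ T : Finset (Fin p),
      (condA A B Co (T.image fun j => ((0 : Fin 1), j)) ∧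
        condB A B Co (T.image fun j => ((0 : Fin 1), j))) ↔
      (∀ k : Fin β, ∃ j ∈ T, ∃ a ∈ Cb k, Co a j)) ∧
    sInf {c : NNReal | ∃ K : Finset (Fin 1 × Fin p),
        condA A B Co K ∧ condB A B Co K ∧ c = fcost P K}
      = sInf {c : NNReal | ∃ T : Finset (Fin p),
          (∀ k : Fin β, ∃ j ∈ T, ∃ a ∈ Cb k, Co a j) ∧ c = ∑ j ∈ T, P 0 j} := by
  have main : ∀ T : Finset (Fin p),
      (condA A B Co (T.image fun j => ((0 : Fin 1), j)) ∧
        condB A B Co (T.image fun j => ((0 : Fin 1), j))) ↔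
      (∀ k : Fin β, ∃ j ∈ T, ∃ a ∈ Cb k, Co a j) := by
    intro T
    constructor
    · rintro ⟨hA, -⟩ k
      obtain ⟨a, ha, -⟩ := hscc k
      obtain ⟨e, -, ⟨hu, -⟩, -⟩ := hA a
      rcases cover_of_escape (hnb k) ha hu with ⟨e, he, h⟩ | ⟨c, -, h⟩ | ⟨j, h, -⟩
      · obtain ⟨j, hj, rfl⟩ := Finset.mem_image.mp he
        exact ⟨j, hj, h⟩
      · simp [stX, stU] at h
      · simp [stY, stU] at h
    · intro hT
      constructor
      · intro a
        obtain ⟨c, hac, hc⟩ := exists_terminal A a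
        obtain ⟨k, hk⟩ := hall c hc
        obtain ⟨j, hj, b, hb, hbj⟩ := hT k
        obtain ⟨r, -, hr⟩ := hscc k
        have hab : Relation.ReflTransGen A a b :=
          (hac.trans ((hr c).mp hk).2).trans ((hr b).mp hb).1
        obtain ⟨s, hs, hsa⟩ := hreach a
        have hmem : ((0 : Fin 1), j) ∈ T.image fun j => ((0 : Fin 1), j) :=
          Finset.mem_image.mpr ⟨j, hj, rfl⟩
        have h1 : Relation.ReflTransGen
            (closedEdge A B Co (T.image fun j => ((0 : Fin 1), j))) (stX a) (stY j) :=
          (closed_of_state hab).tail (by exact hbj)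
        have h2 : closedEdge A B Co (T.image fun j => ((0 : Fin 1), j)) (stY j) (stU 0) := hmem
        have h3 : Relation.ReflTransGen
            (closedEdge A B Co (T.image fun j => ((0 : Fin 1), j))) (stU 0) (stX a) :=
          Relation.ReflTransGen.head (b := stX s) hs (closed_of_state hsa)
        exact ⟨(0, j), hmem, ⟨h1.tail h2, h3⟩, ⟨h1, Relation.ReflTransGen.head h2 h3⟩⟩
      · refine ⟨Set.range stX, Sum.map σ id, ⟨?_, ?_, ?_⟩, fun a => ⟨a, rfl⟩, ?_⟩
        · rintro _ ⟨a, rfl⟩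
          exact ⟨σ a, rfl⟩
        · rintro _ ⟨a, rfl⟩ _ ⟨b, rfl⟩ h
          have h' : σ a = σ b := Sum.inl_injective h
          rw [σ.injective h']
        · rintro _ ⟨a, rfl⟩
          exact ⟨stX (σ.symm a), ⟨_, rfl⟩, congrArg Sum.inl (σ.apply_symm_apply a)⟩
        · rintro _ ⟨a, rfl⟩
          exact hσ a
  have hcost : ∀ T : Finset (Fin p),
      fcost P (T.image fun j => ((0 : Fin 1), j)) = ∑ j ∈ T, P 0 j := by
    intro T
    unfold fcost
    rw [Finset.sum_image]
    intro x _ y _ h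
    exact (Prod.mk.inj h).2
  refine ⟨main, ?_⟩
  congr 1
  ext c
  constructor
  · rintro ⟨K, hA, hB, rfl⟩
    have hK : K = (K.image Prod.snd).image fun j => ((0 : Fin 1), j) := by
      ext ⟨i, j⟩
      have hi : i = 0 := Subsingleton.elim _ _
      subst hi
      simp
    rw [hK] at hA hB
    refine ⟨K.image Prod.snd, (main _).mp ⟨hA, hB⟩, ?_⟩
    rw [← hcost, ← hK]
  · rintro ⟨T, hT, rfl⟩
    obtain ⟨hA, hB⟩ := (main T).mpr hT
    exact ⟨_, hA, hB, (hcost T).symm⟩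
end
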